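/- Let X be a metric space satisfying assumptions (A) and let Ω ⊊ X be a bounded domain satisfying the bounded turning condition. Suppose {E_k} is a chain in Ω whose members E_k are subdomains (open connected subsets) of Ω, and let (x_n) be a sequence of points of Ω converging in the metric of X to a point x belonging to the impression ⋂_k closure(E_k). Then for every k there exists n_k such that x_n ∈ E_k for all n > n_k. -/

import Mathlib

open Set Metric Filter Bornology
open scoped ENNReal Topology

noncomputable section

/-- A metric space is doubling if there is `N` such that every ball of radius `r`
can be covered by at most `N` balls of radius `r/2`. -/
def DoublingSpace (X : Type*) [MetricSpace X] : Prop :=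
  ∃ N : ℕ, ∀ (x : X) (r : ℝ), ∃ t : Finset X,
    t.card ≤ N ∧ Metric.ball x r ⊆ ⋃ y ∈ t, Metric.ball y (r / 2)

/-- A metric space is quasiconvex if there is `C ≥ 1` such that any two points are
joined by a rectifiable curve of length at most `C · d(x,y)`. -/
def QuasiconvexSpace (X : Type*) [MetricSpace X] : Prop :=
  ∃ C : ℝ, 1 ≤ C ∧ ∀ x y : X, ∃ γ : ℝ → X,
    ContinuousOn γ (Set.Icc 0 1) ∧ γ 0 = x ∧ γ 1 = y ∧
    eVariationOn γ (Set.Icc 0 1) ≤ ENNReal.ofReal (C * dist x y)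

/-- Assumptions (A): complete, doubling and quasiconvex. -/
def AssumptionsA (X : Type*) [MetricSpace X] : Prop :=
  CompleteSpace X ∧ DoublingSpace X ∧ QuasiconvexSpace X

/-- A domain: a nonempty open connected subset. -/
def IsDomainIn {X : Type*} [MetricSpace X] (Ω : Set X) : Prop :=
  IsOpen Ω ∧ IsConnected Ω

/-- The inner diameter distance `dist_{M'}` between `E, F ⊆ Ω`: the infimum of diameters of
rectifiable curves in `Ω` joining `E` and `F` (the infimum of the empty set being `∞`). -/
def innerDiamDist {X : Type*} [MetricSpace X] (Ω E F : Set X) : ℝ≥0∞ :=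
  ⨅ (γ : ℝ → X) (_ : ContinuousOn γ (Set.Icc 0 1) ∧ γ '' Set.Icc 0 1 ⊆ Ω ∧
      eVariationOn γ (Set.Icc 0 1) < ⊤ ∧ γ 0 ∈ E ∧ γ 1 ∈ F),
    EMetric.diam (γ '' Set.Icc 0 1)

/-- The Mazurkiewicz distance `dist_M` between `A, B ⊆ Ω`: the infimum of diameters of
connected subsets of `Ω` meeting both `A` and `B`. -/
def mazDist {X : Type*} [MetricSpace X] (Ω A B : Set X) : ℝ≥0∞ :=
  ⨅ (K : Set X) (_ : K ⊆ Ω ∧ IsConnected K ∧ (K ∩ A).Nonempty ∧ (K ∩ B).Nonempty),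
    EMetric.diam K

/-- An acceptable set in a bounded domain `Ω`: a bounded connected proper subset of `Ω`
whose closure meets `∂Ω`. -/
def AcceptableIn {X : Type*} [MetricSpace X] (Ω E : Set X) : Prop :=
  Bornology.IsBounded E ∧ IsConnected E ∧ E ⊆ Ω ∧ E ≠ Ω ∧
    (closure E ∩ frontier Ω).Nonempty

/-- A chain in `Ω`. -/
def IsChainIn {X : Type*} [MetricSpace X] (Ω : Set X) (E : ℕ → Set X) : Prop :=
  (∀ k, AcceptableIn Ω (E k)) ∧
  (∀ k, E (k + 1) ⊆ E k) ∧
  (∀ k, 0 < mazDist Ω (Ω ∩ frontier (E (k + 1))) (Ω ∩ frontier (E k))) ∧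
  (⋂ k, closure (E k)) ⊆ frontier Ω

/-- The impression of a chain. -/
def impression {X : Type*} [MetricSpace X] (E : ℕ → Set X) : Set X :=
  ⋂ k, closure (E k)

/-- A chain `E` divides a chain `F` if every member of `F` contains some member of `E`. -/
def ChainDivides {X : Type*} (E F : ℕ → Set X) : Prop :=
  ∀ k, ∃ l, E l ⊆ F k

/-- Two chains are equivalent if they divide each other. -/
def ChainEquiv {X : Type*} (E F : ℕ → Set X) : Prop :=
  ChainDivides E F ∧ ChainDivides F E

/-- A chain represents a prime end if every chain dividing it is equivalent to it. -/
def IsPrimeChain {X : Type*} [MetricSpace X] (Ω : Set X) (E : ℕ → Set X) : Prop :=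
  IsChainIn Ω E ∧ ∀ F : ℕ → Set X, IsChainIn Ω F → ChainDivides F E → ChainDivides E F

/-- A chain represents a singleton prime end if moreover its impression is a single point. -/
def IsSingletonPrimeChain {X : Type*} [MetricSpace X] (Ω : Set X) (E : ℕ → Set X) : Prop :=
  IsPrimeChain Ω E ∧ ∃ x : X, impression E = {x}

/-- The bounded turning condition (linear connectedness): any two distinct points of `Ω` lie in a
continuum contained in `Ω` of diameter at most `L` times their distance. -/
def BoundedTurning {X : Type*} [MetricSpace X] (Ω : Set X) : Prop :=
  ∃ L : ℝ, 1 ≤ L ∧ ∀ x ∈ Ω, ∀ y ∈ Ω, x ≠ y → ∃ K : Set X,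
    K ⊆ Ω ∧ IsCompact K ∧ IsConnected K ∧ K.Nontrivial ∧ x ∈ K ∧ y ∈ K ∧
    Metric.diam K ≤ L * dist x y

/-- `Ω` is finitely connected at a boundary point `x`. -/
def FinitelyConnectedAt {X : Type*} [MetricSpace X] (Ω : Set X) (x : X) : Prop :=
  ∀ r : ℝ, 0 < r → ∃ U : Set X, IsOpen U ∧ Bornology.IsBounded U ∧ x ∈ U ∧
    U ⊆ Metric.ball x r ∧
    {C : Set X | ∃ y ∈ U ∩ Ω, C = connectedComponentIn (U ∩ Ω) y}.Finite

/-- `Ω` is finitely connected at the boundary. -/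
def FinitelyConnectedAtBoundary {X : Type*} [MetricSpace X] (Ω : Set X) : Prop :=
  ∀ x ∈ frontier Ω, FinitelyConnectedAt Ω x

/-- `Ω` is locally connected at a boundary point `x`. -/
def LocallyConnectedAt {X : Type*} [MetricSpace X] (Ω : Set X) (x : X) : Prop :=
  ∀ r : ℝ, 0 < r → ∃ U : Set X, IsOpen U ∧ Bornology.IsBounded U ∧ x ∈ U ∧
    U ⊆ Metric.ball x r ∧ IsConnected (U ∩ Ω)

/-- `Ω` is locally connected at the boundary. -/
def LocallyConnectedAtBoundary {X : Type*} [MetricSpace X] (Ω : Set X) : Prop :=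
  ∀ x ∈ frontier Ω, LocallyConnectedAt Ω x

/-- `f` is a homeomorphism of `Ω` onto `Ω'` with inverse `g`. -/
def IsHomeoBetween {X Y : Type*} [MetricSpace X] [MetricSpace Y] (f : X → Y) (g : Y → X)
    (Ω : Set X) (Ω' : Set Y) : Prop :=
  ContinuousOn f Ω ∧ ContinuousOn g Ω' ∧ Set.MapsTo f Ω Ω' ∧ Set.MapsTo g Ω' Ω ∧
  (∀ x ∈ Ω, g (f x) = x) ∧ (∀ y ∈ Ω', f (g y) = y)

/-- The class `F(Ω, Ω')`: homeomorphisms such that for all connected `E, F ⊊ Ω`,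
`dist_{M'}(E,F) = 0` iff `dist_{M'}(f(E), f(F)) = 0`. -/
def ClassF {X Y : Type*} [MetricSpace X] [MetricSpace Y] (Ω : Set X) (Ω' : Set Y)
    (f : X → Y) (g : Y → X) : Prop :=
  IsHomeoBetween f g Ω Ω' ∧
  ∀ E F : Set X, E ⊆ Ω → E ≠ Ω → IsConnected E → F ⊆ Ω → F ≠ Ω → IsConnected F →
    (innerDiamDist Ω E F = 0 ↔ innerDiamDist Ω' (f '' E) (f '' F) = 0)

/-- The cluster set `C(f, x)` of `f : Ω → Y` at `x`. -/
def clusterSetOn {X Y : Type*} [MetricSpace X] [MetricSpace Y] (f : X → Y) (Ω : Set X)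
    (x : X) : Set Y :=
  ⋂ U ∈ 𝓝 x, closure (f '' (U ∩ Ω))

/-!
A connected subset of `Ω` joining `E (k + 1)` to `Ω \ E k` crosses the frontiers of both
`E (k + 1)` and `E k`, so its diameter is at least their Mazurkiewicz distance. Under bounded
turning this bounds the metric distance between `E (k + 1)` and `Ω \ E k` from below, and a point of
`closure (E (k + 1))` therefore has a neighbourhood whose trace on `Ω` lies in `E k`.
-/

open scoped NNReal

theorem nonempty_inter_frontier_of_isPreconnected {X : Type*} [TopologicalSpace X] {K A : Set X}
    (hK : IsPreconnected K) (hA : (K ∩ A).Nonempty) (hAc : (K ∩ Aᶜ).Nonempty) :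
    (K ∩ frontier A).Nonempty := by
  obtain ⟨y, hyK, hyA⟩ := hA
  obtain ⟨z, hzK, hzA⟩ := hAc
  by_contra hempty
  have hcover : K ⊆ interior A ∪ interior Aᶜ := by
    rw [← compl_frontier_eq_union_interior, subset_compl_iff_disjoint_right,
      disjoint_iff_inter_eq_empty]
    exact not_nonempty_iff_eq_empty.1 hempty
  have hdisj : Disjoint (interior A) (interior Aᶜ) :=
    disjoint_compl_right.mono interior_subset interior_subset
  rcases hK.subset_or_subset isOpen_interior isOpen_interior hdisj hcover with h | h
  · exact hzA (interior_subset (h hzK))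
  · exact interior_subset (h hyK) hyA

theorem areSeparated_closure {X : Type*} [PseudoEMetricSpace X] {s t : Set X}
    (h : AreSeparated s t) : AreSeparated (closure s) (closure t) := by
  obtain ⟨r, hr, hle⟩ := h
  have hclosed : IsClosed {p : X × X | r ≤ edist p.1 p.2} :=
    isClosed_le continuous_const continuous_edist
  have hsub : closure (s ×ˢ t) ⊆ {p : X × X | r ≤ edist p.1 p.2} :=
    closure_minimal (fun p hp => hle p.1 hp.1 p.2 hp.2) hclosed
  rw [closure_prod_eq] at hsub
  exact ⟨r, hr, fun x hx y hy => hsub (mk_mem_prod hx hy)⟩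

section Mazurkiewicz

variable {X : Type*} [MetricSpace X] {Ω E F K : Set X}

theorem mazDist_le_ediam {A B : Set X} (hKΩ : K ⊆ Ω) (hK : IsConnected K)
    (hA : (K ∩ A).Nonempty) (hB : (K ∩ B).Nonempty) : mazDist Ω A B ≤ ediam K :=
  iInf₂_le K ⟨hKΩ, hK, hA, hB⟩

theorem mazDist_frontier_le_ediam (hFE : F ⊆ E) (hKΩ : K ⊆ Ω) (hK : IsConnected K)
    (hKF : (K ∩ F).Nonempty) (hKE : (K ∩ Eᶜ).Nonempty) :
    mazDist Ω (Ω ∩ frontier F) (Ω ∩ frontier E) ≤ ediam K := by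
  have hcrossF : (K ∩ frontier F).Nonempty :=
    nonempty_inter_frontier_of_isPreconnected hK.isPreconnected hKF
      (hKE.mono (inter_subset_inter_right K (compl_subset_compl.2 hFE)))
  have hcrossE : (K ∩ frontier E).Nonempty :=
    nonempty_inter_frontier_of_isPreconnected hK.isPreconnected
      (hKF.mono (inter_subset_inter_right K hFE)) hKE
  refine mazDist_le_ediam hKΩ hK ?_ ?_ <;> rwa [← inter_assoc, inter_eq_left.2 hKΩ]

namespace BoundedTurning

theorem exists_isConnected_ediam_le (hΩ : BoundedTurning Ω) :
    ∃ L : ℝ≥0, ∀ x ∈ Ω, ∀ y ∈ Ω, ∃ K ⊆ Ω,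
      IsConnected K ∧ x ∈ K ∧ y ∈ K ∧ ediam K ≤ L * edist x y := by
  obtain ⟨L, hL, hturn⟩ := hΩ
  refine ⟨L.toNNReal, fun x hx y hy => ?_⟩
  obtain rfl | hxy := eq_or_ne x y
  · exact ⟨{x}, singleton_subset_iff.2 hx, isConnected_singleton, rfl, rfl, by simp⟩
  obtain ⟨K, hKΩ, hKcompact, hK, -, hxK, hyK, hdiam⟩ := hturn x hx y hy hxy
  refine ⟨K, hKΩ, hK, hxK, hyK, ?_⟩
  calc ediam K = ENNReal.ofReal (diam K) :=
        (ENNReal.ofReal_toReal hKcompact.isBounded.ediam_ne_top).symm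
    _ ≤ ENNReal.ofReal (L * dist x y) := ENNReal.ofReal_le_ofReal hdiam
    _ = L.toNNReal * edist x y := by
        rw [ENNReal.ofReal_mul (zero_le_one.trans hL), edist_dist, ENNReal.ofReal]

theorem areSeparated_sdiff (hΩ : BoundedTurning Ω) (hFΩ : F ⊆ Ω) (hFE : F ⊆ E)
    (hmaz : 0 < mazDist Ω (Ω ∩ frontier F) (Ω ∩ frontier E)) :
    AreSeparated F (Ω \ E) := by
  obtain ⟨L, hjoin⟩ := hΩ.exists_isConnected_ediam_le
  refine ⟨mazDist Ω (Ω ∩ frontier F) (Ω ∩ frontier E) / L,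
    ENNReal.div_ne_zero.2 ⟨hmaz.ne', ENNReal.coe_ne_top⟩, fun y hy z hz => ?_⟩
  obtain ⟨K, hKΩ, hK, hyK, hzK, hdiam⟩ := hjoin y (hFΩ hy) z hz.1
  exact ENNReal.div_le_of_le_mul'
    ((mazDist_frontier_le_ediam hFE hKΩ hK ⟨y, hyK, hy⟩ ⟨z, hzK, hz.2⟩).trans hdiam)

theorem mem_nhdsWithin_of_mem_closure (hΩ : BoundedTurning Ω) (hFΩ : F ⊆ Ω) (hFE : F ⊆ E)
    (hmaz : 0 < mazDist Ω (Ω ∩ frontier F) (Ω ∩ frontier E)) {x : X} (hx : x ∈ closure F) :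
    E ∈ 𝓝[Ω] x := by
  have hx_notMem : x ∉ closure (Ω \ E) :=
    disjoint_left.1 (areSeparated_closure (hΩ.areSeparated_sdiff hFΩ hFE hmaz)).disjoint hx
  rw [mem_closure_iff_frequently, not_frequently] at hx_notMem
  rw [mem_nhdsWithin_iff_eventually]
  filter_upwards [hx_notMem] with y hy hyΩ
  exact by_contra fun hyE => hy ⟨hyΩ, hyE⟩

end BoundedTurning

end Mazurkiewicz

theorem statement_0_general {X : Type*} [MetricSpace X] {Ω : Set X} (hΩ : BoundedTurning Ω)
    {E : ℕ → Set X} (hEΩ : ∀ k, E k ⊆ Ω) (hE : ∀ k, E (k + 1) ⊆ E k)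
    (hmaz : ∀ k, 0 < mazDist Ω (Ω ∩ frontier (E (k + 1))) (Ω ∩ frontier (E k)))
    {x : X} (hx : x ∈ impression E) {ι : Type*} {l : Filter ι} {u : ι → X}
    (hu : ∀ᶠ i in l, u i ∈ Ω) (hconv : Tendsto u l (𝓝 x)) (k : ℕ) :
    ∀ᶠ i in l, u i ∈ E k :=
  tendsto_nhdsWithin_iff.2 ⟨hconv, hu⟩ <|
    hΩ.mem_nhdsWithin_of_mem_closure (hEΩ (k + 1)) (hE k) (hmaz k) (mem_iInter.1 hx (k + 1))

/-- convergence of points of `Ω` to a point of the impression of a chain of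
subdomains implies eventual membership in every member of the chain. -/
theorem statement_0 {X : Type*} [MetricSpace X] (hX : AssumptionsA X)
    (Ω : Set X) (hΩdom : IsDomainIn Ω) (hΩbdd : Bornology.IsBounded Ω)
    (hΩne : Ω ≠ Set.univ) (hΩbt : BoundedTurning Ω)
    (E : ℕ → Set X) (hchain : IsChainIn Ω E) (hopen : ∀ k, IsOpen (E k))
    (x : X) (hx : x ∈ ⋂ k, closure (E k))
    (u : ℕ → X) (hu : ∀ n, u n ∈ Ω)
    (hconv : Filter.Tendsto u Filter.atTop (𝓝 x)) :
    ∀ k : ℕ, ∃ N : ℕ, ∀ n > N, u n ∈ E k := by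
  intro k
  obtain ⟨N, hN⟩ := eventually_atTop.1 <|
    statement_0_general hΩbt (fun k => (hchain.1 k).2.2.1) hchain.2.1 hchain.2.2.1 hx
      (.of_forall hu) hconv k
  exact ⟨N, fun n hn => hN n hn.le⟩
end
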